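/- arXiv:0711.1135 — 5 statements merged into one kernel-verified Lean document; each statement's English description precedes it below -/
import Mathlib

section
/- Let V be a representation of a quiver Q over a field K, let Q^op be the opposite quiver (same vertices, all arrows reversed), and let DV be the representation of Q^op with (DV)_x = V_x^* and (DV)_a = V_a^* (the transpose map). Then for every vertex x, the maximal epimorphic subrepresentation of DV satisfies Γ_{Q^op}(DV)_x = { f ∈ V_x^* : f vanishes on Δ_Q(V)_x }, the annihilator of the minimal coclosed subrepresentation Δ_Q(V) at x. -/
open Submodule

section Defs

variable {K : Type} [Field K]
variable {Q₀ Q₁ : Type} (tl hd : Q₁ → Q₀)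
variable (Vx : Q₀ → Type) [∀ x, AddCommGroup (Vx x)] [∀ x, Module K (Vx x)]
variable (Va : ∀ a : Q₁, Vx (tl a) →ₗ[K] Vx (hd a))

/-- `U` is a subrepresentation of the representation `(Vx, Va)`. -/
def IsSubrep (U : ∀ x, Submodule K (Vx x)) : Prop :=
  ∀ a : Q₁, (U (tl a)).map (Va a) ≤ U (hd a)

/-- `U` is an epimorphic subrepresentation: `V_a(U_{ta}) = U_{ha}` for every arrow. -/
def IsEpiSub (U : ∀ x, Submodule K (Vx x)) : Prop :=
  ∀ a : Q₁, (U (tl a)).map (Va a) = U (hd a)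

/-- `N` is a coclosed subrepresentation: it is a subrepresentation and
`V_a⁻¹(N_{ha}) ⊆ N_{ta}` for every arrow. -/
def IsCoclosedSub (N : ∀ x, Submodule K (Vx x)) : Prop :=
  IsSubrep tl hd Vx Va N ∧ ∀ a : Q₁, (N (hd a)).comap (Va a) ≤ N (tl a)

/-- `Γ(V)`, the sum of all epimorphic subrepresentations. -/
def Gamma (x : Q₀) : Submodule K (Vx x) :=
  ⨆ U : {U : ∀ y, Submodule K (Vx y) // IsEpiSub tl hd Vx Va U}, U.1 x

/-- `Δ(V)`, the intersection of all coclosed subrepresentations. -/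
def Delta (x : Q₀) : Submodule K (Vx x) :=
  ⨅ N : {N : ∀ y, Submodule K (Vx y) // IsCoclosedSub tl hd Vx Va N}, N.1 x

lemma le_gamma {U : ∀ y, Submodule K (Vx y)} (hU : IsEpiSub tl hd Vx Va U) (x : Q₀) :
    U x ≤ Gamma tl hd Vx Va x :=
  le_iSup (fun (W : {U // IsEpiSub tl hd Vx Va U}) => W.1 x) ⟨U, hU⟩

lemma delta_le {N : ∀ y, Submodule K (Vx y)} (hN : IsCoclosedSub tl hd Vx Va N) (x : Q₀) :
    Delta tl hd Vx Va x ≤ N x :=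
  iInf_le (fun (W : {N // IsCoclosedSub tl hd Vx Va N}) => W.1 x) ⟨N, hN⟩

lemma gamma_epi : IsEpiSub tl hd Vx Va (Gamma tl hd Vx Va) := by
  intro a
  apply le_antisymm
  · rw [Gamma, Submodule.map_iSup]
    refine iSup_le fun U => ?_
    rw [U.2 a]
    exact le_gamma tl hd Vx Va U.2 (hd a)
  · refine iSup_le fun U => ?_
    rw [← U.2 a]
    exact Submodule.map_mono (le_gamma tl hd Vx Va U.2 (tl a))

lemma gamma_subrep : IsSubrep tl hd Vx Va (Gamma tl hd Vx Va) :=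
  fun a => le_of_eq (gamma_epi tl hd Vx Va a)

lemma delta_subrep : IsSubrep tl hd Vx Va (Delta tl hd Vx Va) := by
  intro a
  have : ∀ N : {N // IsCoclosedSub tl hd Vx Va N},
      (Delta tl hd Vx Va (tl a)).map (Va a) ≤ N.1 (hd a) :=
    fun N => le_trans (Submodule.map_mono (delta_le tl hd Vx Va N.2 (tl a))) (N.2.1 a)
  exact le_iInf this

/-- `Γ(V) + Δ(V)` pointwise. -/
abbrev GD (x : Q₀) : Submodule K (Vx x) := Gamma tl hd Vx Va x ⊔ Delta tl hd Vx Va x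

/-- `Δ(V)`, seen inside `Γ(V) + Δ(V)`. -/
abbrev rkfDen (x : Q₀) : Submodule K (GD tl hd Vx Va x) :=
  (Delta tl hd Vx Va x).comap (GD tl hd Vx Va x).subtype

/-- The vertex spaces `(Γ(V)_x + Δ(V)_x)/Δ(V)_x` of the global tensor functor. -/
abbrev rkfSpace (x : Q₀) : Type :=
  GD tl hd Vx Va x ⧸ rkfDen tl hd Vx Va x

lemma gd_mapsTo (a : Q₁) : ∀ v ∈ GD tl hd Vx Va (tl a), Va a v ∈ GD tl hd Vx Va (hd a) := by
  intro v hv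
  have : (GD tl hd Vx Va (tl a)).map (Va a) ≤ GD tl hd Vx Va (hd a) := by
    rw [Submodule.map_sup]
    exact sup_le_sup (gamma_subrep tl hd Vx Va a) (delta_subrep tl hd Vx Va a)
  exact this ⟨v, hv, rfl⟩

/-- The arrow maps of the global tensor functor, induced by the `V_a`. -/
def rkfMap (a : Q₁) : rkfSpace tl hd Vx Va (tl a) →ₗ[K] rkfSpace tl hd Vx Va (hd a) :=
  Submodule.liftQ _
    ((rkfDen tl hd Vx Va (hd a)).mkQ ∘ₗ (Va a).restrict (gd_mapsTo tl hd Vx Va a))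
    (by
      intro v hv
      simp only [LinearMap.mem_ker, LinearMap.comp_apply, Submodule.mkQ_apply,
        Submodule.Quotient.mk_eq_zero]
      have hv' : (v : Vx (tl a)) ∈ Delta tl hd Vx Va (tl a) := hv
      show (Va a) (v : Vx (tl a)) ∈ Delta tl hd Vx Va (hd a)
      exact delta_subrep tl hd Vx Va a ⟨(v : Vx (tl a)), hv', rfl⟩)

/-- Isomorphism of quiver representations. -/
def RepIso (Wx : Q₀ → Type) [∀ x, AddCommGroup (Wx x)] [∀ x, Module K (Wx x)]
    (Wa : ∀ a : Q₁, Wx (tl a) →ₗ[K] Wx (hd a)) : Prop :=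
  ∃ φ : ∀ x, Vx x ≃ₗ[K] Wx x, ∀ (a : Q₁) (v : Vx (tl a)), φ (hd a) (Va a v) = Wa a (φ (tl a) v)

end Defs

/-!
Write `N^⊥ ≤ W*` for the annihilator of `N ≤ W` and `Φ_⊥ ≤ W` for the common kernel of `Φ ≤ W*`.
For `f : V →ₗ W`, both operations exchange preimages under `f` with images under the dual map `f*`:
`f*(N^⊥) = (f⁻¹ N)^⊥` and `(f* Φ)_⊥ = f⁻¹(Φ_⊥)`. A family `N` is coclosed exactly when `V_a⁻¹ N_{ha} = N_{ta}` for every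
arrow `a`, so `N ↦ N^⊥` sends coclosed subrepresentations of `V` to epimorphic subrepresentations
of `DV`, and `U ↦ U_⊥` goes the other way. Hence `Δ(V)^⊥ ≤ Γ(DV)` by maximality of `Γ(DV)`, and
`Δ(V) ≤ Γ(DV)_⊥` by minimality of `Δ(V)`; the latter says `Γ(DV) ≤ Δ(V)^⊥`, by the Galois
connection between `^⊥` and `_⊥`.
-/

section DualMap

lemma dualCoannihilator_map_dualMap {R M N : Type*} [CommSemiring R]
    [AddCommMonoid M] [Module R M] [AddCommMonoid N] [Module R N]
    (f : M →ₗ[R] N) (Φ : Submodule R (Module.Dual R N)) :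
    (Φ.map f.dualMap).dualCoannihilator = Φ.dualCoannihilator.comap f := by
  ext v
  simp [mem_dualCoannihilator]

lemma dualAnnihilator_map_dualMap {K V W : Type*} [Field K]
    [AddCommGroup V] [Module K V] [AddCommGroup W] [Module K W]
    (f : V →ₗ[K] W) (N : Submodule K W) :
    N.dualAnnihilator.map f.dualMap = (N.comap f).dualAnnihilator :=
  calc N.dualAnnihilator.map f.dualMap
      = (LinearMap.range N.mkQ.dualMap).map f.dualMap := by rw [range_dualMap_mkQ_eq]
    _ = LinearMap.range (N.mkQ ∘ₗ f).dualMap := by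
      rw [← LinearMap.range_comp, LinearMap.dualMap_comp_dualMap]
    _ = (LinearMap.ker (N.mkQ ∘ₗ f)).dualAnnihilator :=
      LinearMap.range_dualMap_eq_dualAnnihilator_ker _
    _ = (N.comap f).dualAnnihilator := by rw [LinearMap.ker_comp, ker_mkQ]

end DualMap

section Duality

variable {K : Type} [Field K] {Q₀ Q₁ : Type} {tl hd : Q₁ → Q₀}
variable {Vx : Q₀ → Type} [∀ x, AddCommGroup (Vx x)] [∀ x, Module K (Vx x)]
variable {Va : ∀ a : Q₁, Vx (tl a) →ₗ[K] Vx (hd a)}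

lemma isCoclosedSub_iff_comap_eq {N : ∀ x, Submodule K (Vx x)} :
    IsCoclosedSub tl hd Vx Va N ↔ ∀ a, (N (hd a)).comap (Va a) = N (tl a) := by
  simp only [IsCoclosedSub, IsSubrep, map_le_iff_le_comap, le_antisymm_iff, forall_and, and_comm]

variable (tl hd Vx Va) in
lemma delta_coclosed : IsCoclosedSub tl hd Vx Va (Delta tl hd Vx Va) :=
  ⟨delta_subrep tl hd Vx Va, fun a => le_iInf fun N =>
    (comap_mono (delta_le tl hd Vx Va N.2 (hd a))).trans (N.2.2 a)⟩

lemma IsCoclosedSub.isEpiSub_dualAnnihilator {N : ∀ x, Submodule K (Vx x)}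
    (hN : IsCoclosedSub tl hd Vx Va N) :
    IsEpiSub hd tl (fun x => Module.Dual K (Vx x)) (fun a => (Va a).dualMap)
      (fun x => (N x).dualAnnihilator) := fun a => by
  rw [dualAnnihilator_map_dualMap, isCoclosedSub_iff_comap_eq.1 hN a]

lemma IsEpiSub.isCoclosedSub_dualCoannihilator {U : ∀ x, Submodule K (Module.Dual K (Vx x))}
    (hU : IsEpiSub hd tl (fun x => Module.Dual K (Vx x)) (fun a => (Va a).dualMap) U) :
    IsCoclosedSub tl hd Vx Va (fun x => (U x).dualCoannihilator) :=
  isCoclosedSub_iff_comap_eq.2 fun a => by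
    rw [← dualCoannihilator_map_dualMap, hU a]

end Duality

theorem stmt_1_general {K : Type} [Field K] {Q₀ Q₁ : Type} (tl hd : Q₁ → Q₀)
    (Vx : Q₀ → Type) [∀ x, AddCommGroup (Vx x)] [∀ x, Module K (Vx x)]
    (Va : ∀ a : Q₁, Vx (tl a) →ₗ[K] Vx (hd a)) (x : Q₀) :
    Gamma hd tl (fun y => Module.Dual K (Vx y)) (fun a => (Va a).dualMap) x
      = (Delta tl hd Vx Va x).dualAnnihilator := by
  apply le_antisymm
  · rw [le_dualAnnihilator_iff_le_dualCoannihilator]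
    have gamma_dual_epi := gamma_epi hd tl (fun y => Module.Dual K (Vx y)) fun a => (Va a).dualMap
    exact delta_le tl hd Vx Va gamma_dual_epi.isCoclosedSub_dualCoannihilator x
  · exact le_gamma hd tl _ _ (delta_coclosed tl hd Vx Va).isEpiSub_dualAnnihilator x

/-- for the dual representation `DV` of the opposite quiver,
`Γ_{Qᵒᵖ}(DV)_x` is the annihilator of `Δ_Q(V)_x`. -/
theorem stmt_1 {K : Type} [Field K] {Q₀ Q₁ : Type} [Fintype Q₀] [Fintype Q₁]
    (tl hd : Q₁ → Q₀)
    (Vx : Q₀ → Type) [∀ x, AddCommGroup (Vx x)] [∀ x, Module K (Vx x)]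
    [∀ x, FiniteDimensional K (Vx x)]
    (Va : ∀ a : Q₁, Vx (tl a) →ₗ[K] Vx (hd a)) :
    ∀ x : Q₀,
      Gamma hd tl (fun y => Module.Dual K (Vx y)) (fun a => (Va a).dualMap) x
        = (Delta tl hd Vx Va x).dualAnnihilator :=
  stmt_1_general tl hd Vx Va
end

section
/- Let V, W be representations of a quiver Q over a field K and let V⊗W be their pointwise tensor product. Then for every vertex x, the image of Γ(V)_x ⊗ Γ(W)_x under the canonical inclusion into V_x ⊗ W_x is contained in Γ(V⊗W)_x; that is, the tensor product of the maximal epimorphic subrepresentations is an epimorphic subrepresentation of V⊗W and hence contained in Γ(V⊗W). -/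
open Submodule

section TensorProduct

variable {R M M' N N' : Type*} [CommSemiring R]
  [AddCommMonoid M] [AddCommMonoid M'] [AddCommMonoid N] [AddCommMonoid N']
  [Module R M] [Module R M'] [Module R N] [Module R N']

lemma map_range_tensorProduct_mapIncl (f : M →ₗ[R] M') (g : N →ₗ[R] N')
    (p : Submodule R M) (q : Submodule R N) :
    (LinearMap.range (TensorProduct.mapIncl p q)).map (TensorProduct.map f g) =
      LinearMap.range (TensorProduct.mapIncl (p.map f) (q.map g)) := by
  rw [TensorProduct.range_mapIncl, TensorProduct.range_mapIncl, map_map₂, map₂_map_map]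
  -- Both bilinear maps are now `(m, n) ↦ f m ⊗ₜ g n`.
  rfl

end TensorProduct

lemma IsEpiSub.tensorProduct {K : Type} [Field K] {Q₀ Q₁ : Type} {tl hd : Q₁ → Q₀}
    {Vx : Q₀ → Type} [∀ x, AddCommGroup (Vx x)] [∀ x, Module K (Vx x)]
    {Va : ∀ a : Q₁, Vx (tl a) →ₗ[K] Vx (hd a)}
    {Wx : Q₀ → Type} [∀ x, AddCommGroup (Wx x)] [∀ x, Module K (Wx x)]
    {Wa : ∀ a : Q₁, Wx (tl a) →ₗ[K] Wx (hd a)}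
    {S : ∀ x, Submodule K (Vx x)} {T : ∀ x, Submodule K (Wx x)}
    (hS : IsEpiSub tl hd Vx Va S) (hT : IsEpiSub tl hd Wx Wa T) :
    IsEpiSub tl hd (fun x => TensorProduct K (Vx x) (Wx x))
      (fun a => TensorProduct.map (Va a) (Wa a))
      (fun x => LinearMap.range (TensorProduct.mapIncl (S x) (T x))) := by
  intro a
  rw [map_range_tensorProduct_mapIncl, hS a, hT a]

theorem stmt_5_general {K : Type} [Field K] {Q₀ Q₁ : Type}
    (tl hd : Q₁ → Q₀)
    (Vx : Q₀ → Type) [∀ x, AddCommGroup (Vx x)] [∀ x, Module K (Vx x)]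
    (Va : ∀ a : Q₁, Vx (tl a) →ₗ[K] Vx (hd a))
    (Wx : Q₀ → Type) [∀ x, AddCommGroup (Wx x)] [∀ x, Module K (Wx x)]
    (Wa : ∀ a : Q₁, Wx (tl a) →ₗ[K] Wx (hd a)) :
    IsEpiSub tl hd (fun y => TensorProduct K (Vx y) (Wx y))
        (fun a => TensorProduct.map (Va a) (Wa a))
        (fun x => LinearMap.range
          (TensorProduct.mapIncl (Gamma tl hd Vx Va x) (Gamma tl hd Wx Wa x))) ∧
    ∀ x : Q₀,
      LinearMap.range (TensorProduct.mapIncl (Gamma tl hd Vx Va x) (Gamma tl hd Wx Wa x))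
        ≤ Gamma tl hd (fun y => TensorProduct K (Vx y) (Wx y))
            (fun a => TensorProduct.map (Va a) (Wa a)) x := by
  have epi := (gamma_epi tl hd Vx Va).tensorProduct (gamma_epi tl hd Wx Wa)
  exact ⟨epi, le_gamma tl hd _ _ epi⟩

/-- the (image of the) tensor product `Γ(V) ⊗ Γ(W)` is an epimorphic
subrepresentation of `V ⊗ W`, hence contained in `Γ(V ⊗ W)`. -/
theorem stmt_5 {K : Type} [Field K] {Q₀ Q₁ : Type} [Fintype Q₀] [Fintype Q₁]
    (tl hd : Q₁ → Q₀)
    (Vx : Q₀ → Type) [∀ x, AddCommGroup (Vx x)] [∀ x, Module K (Vx x)]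
    [∀ x, FiniteDimensional K (Vx x)]
    (Va : ∀ a : Q₁, Vx (tl a) →ₗ[K] Vx (hd a))
    (Wx : Q₀ → Type) [∀ x, AddCommGroup (Wx x)] [∀ x, Module K (Wx x)]
    [∀ x, FiniteDimensional K (Wx x)]
    (Wa : ∀ a : Q₁, Wx (tl a) →ₗ[K] Wx (hd a)) :
    IsEpiSub tl hd (fun y => TensorProduct K (Vx y) (Wx y))
        (fun a => TensorProduct.map (Va a) (Wa a))
        (fun x => LinearMap.range
          (TensorProduct.mapIncl (Gamma tl hd Vx Va x) (Gamma tl hd Wx Wa x))) ∧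
    ∀ x : Q₀,
      LinearMap.range (TensorProduct.mapIncl (Gamma tl hd Vx Va x) (Gamma tl hd Wx Wa x))
        ≤ Gamma tl hd (fun y => TensorProduct K (Vx y) (Wx y))
            (fun a => TensorProduct.map (Va a) (Wa a)) x :=
  stmt_5_general tl hd Vx Va Wx Wa
end

section
/- Let Q be the Kronecker quiver with two vertices 1, 2 and two arrows a, b, both from 1 to 2. Let V be the representation with V_1 = V_2 = K, V_a = id_K, V_b = 0, and let W be the representation with W_1 = W_2 = K, W_a = 0, W_b = id_K. Then Γ(V) = 0 and Γ(W) = 0, but Γ(V⊗W) ≠ 0; in fact Γ(V⊗W)_1 = V_1 ⊗ W_1 ≅ K and Γ(V⊗W)_2 = 0. Hence the canonical inclusion Γ(V)⊗Γ(W) ⊆ Γ(V⊗W) is not an isomorphism in general. -/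
open Submodule

/-!
`Γ(V)` is itself epimorphic, so it is carried onto its own value at the head of every arrow. A zero
arrow therefore kills `Γ` at its head, and an injective arrow then forces `Γ` to vanish at its tail:
this disposes of `V = (f, 0)` and of `W = (0, g)` for injective `f` and `g`. In `V ⊗ W` both arrows
`f ⊗ 0` and `0 ⊗ g` are zero, so the injectivity that kept `Γ` small is lost, and the whole space
at the source, together with `0` at the sink, is epimorphic.
-/

section GammaAtArrow

variable {K : Type} [Field K] {Q₀ Q₁ : Type} {tl hd : Q₁ → Q₀}
variable {Vx : Q₀ → Type} [∀ x, AddCommGroup (Vx x)] [∀ x, Module K (Vx x)]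
variable {Va : ∀ a : Q₁, Vx (tl a) →ₗ[K] Vx (hd a)}

lemma gamma_hd_eq_bot_of_arrow_eq_zero {a : Q₁} (ha : Va a = 0) :
    Gamma tl hd Vx Va (hd a) = ⊥ := by
  rw [← gamma_epi tl hd Vx Va a, ha, Submodule.map_zero]

lemma gamma_tl_eq_bot_of_arrow_injective {a : Q₁} (ha : Function.Injective (Va a))
    (h_hd : Gamma tl hd Vx Va (hd a) = ⊥) : Gamma tl hd Vx Va (tl a) = ⊥ := by
  apply Submodule.map_injective_of_injective ha
  rw [gamma_epi tl hd Vx Va a, h_hd, Submodule.map_bot]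

lemma gamma_eq_top_of_source_of_arrows_eq_zero {x : Q₀} (hx : ∀ a, hd a ≠ x)
    (h_zero : ∀ a, tl a = x → Va a = 0) : Gamma tl hd Vx Va x = ⊤ := by
  classical
  let U : ∀ y, Submodule K (Vx y) := Function.update ⊥ x ⊤
  have hU : IsEpiSub tl hd Vx Va U := by
    intro a
    have h_hd : U (hd a) = ⊥ := Function.update_of_ne (hx a) _ _
    rw [h_hd]
    by_cases h_tl : tl a = x
    · rw [h_zero a h_tl, Submodule.map_zero]
    · have h_tl_bot : U (tl a) = ⊥ := Function.update_of_ne h_tl _ _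
      rw [h_tl_bot, Submodule.map_bot]
  have hU_top : U x = ⊤ := Function.update_self _ _ _
  exact top_le_iff.mp (hU_top ▸ le_gamma tl hd Vx Va hU x)

end GammaAtArrow

lemma gamma_kronecker_eq_bot {K : Type} [Field K] {Q₁ : Type} {Vx : Bool → Type}
    [∀ x, AddCommGroup (Vx x)] [∀ x, Module K (Vx x)] {Va : Q₁ → Vx false →ₗ[K] Vx true}
    {a b : Q₁} (ha : Function.Injective (Va a)) (hb : Va b = 0) (x : Bool) :
    Gamma (fun _ : Q₁ => false) (fun _ => true) Vx Va x = ⊥ := by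
  have h_sink : Gamma (fun _ : Q₁ => false) (fun _ => true) Vx Va true = ⊥ :=
    gamma_hd_eq_bot_of_arrow_eq_zero hb
  cases x with
  | false => exact gamma_tl_eq_bot_of_arrow_injective ha h_sink
  | true => exact h_sink

theorem stmt_6_general {K : Type} [Field K] {M N : Type} [AddCommGroup M] [Module K M]
    [Nontrivial M] [AddCommGroup N] [Module K N] [Nontrivial N] {f : M →ₗ[K] M} {g : N →ₗ[K] N}
    (hf : Function.Injective f) (hg : Function.Injective g) :
    (∀ x : Bool, Gamma (K := K) (fun _ : Bool => false) (fun _ => true) (fun _ => M)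
        (fun a : Bool => if a then 0 else f) x = ⊥) ∧
    (∀ x : Bool, Gamma (K := K) (fun _ : Bool => false) (fun _ => true) (fun _ => N)
        (fun a : Bool => if a then g else 0) x = ⊥) ∧
    (Gamma (K := K) (fun _ : Bool => false) (fun _ => true) (fun _ => TensorProduct K M N)
        (fun a : Bool => TensorProduct.map (if a then 0 else f) (if a then g else 0))
        false = ⊤) ∧
    (Gamma (K := K) (fun _ : Bool => false) (fun _ => true) (fun _ => TensorProduct K M N)
        (fun a : Bool => TensorProduct.map (if a then 0 else f) (if a then g else 0))
        true = ⊥) ∧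
    ¬ (∀ x : Bool, Gamma (K := K) (fun _ : Bool => false) (fun _ => true)
        (fun _ => TensorProduct K M N)
        (fun a : Bool => TensorProduct.map (if a then 0 else f) (if a then g else 0))
        x = ⊥) := by
  let VW : Bool → TensorProduct K M N →ₗ[K] TensorProduct K M N :=
    fun a => TensorProduct.map (if a then 0 else f) (if a then g else 0)
  have h_zero (a : Bool) : VW a = 0 := by
    cases a
    · exact TensorProduct.map_zero_right f
    · exact TensorProduct.map_zero_left g
  have h_source : Gamma (fun _ : Bool => false) (fun _ => true) _ VW false = ⊤ :=
    gamma_eq_top_of_source_of_arrows_eq_zero (Vx := fun _ => TensorProduct K M N)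
      (fun _ => Bool.false_ne_true.symm) (fun a _ => h_zero a)
  have h_sink : Gamma (fun _ : Bool => false) (fun _ => true) _ VW true = ⊥ :=
    gamma_hd_eq_bot_of_arrow_eq_zero (Vx := fun _ => TensorProduct K M N) (h_zero true)
  exact ⟨gamma_kronecker_eq_bot (a := false) (b := true) hf rfl,
    gamma_kronecker_eq_bot (a := true) (b := false) hg rfl, h_source, h_sink,
    fun h_bot => top_ne_bot (h_source.symm.trans (h_bot false))⟩

/-- on the Kronecker quiver (two arrows `false`, `true` from vertex `false`
to vertex `true`), the representations `V = (id, 0)` and `W = (0, id)` have `Γ(V) = 0`,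
`Γ(W) = 0`, but `Γ(V ⊗ W)` is nonzero: it is everything at the source and `0` at the sink. -/
theorem stmt_6 {K : Type} [Field K] :
    (∀ x : Bool, Gamma (K := K) (fun _ : Bool => false) (fun _ => true) (fun _ => K)
        (fun a : Bool => if a then 0 else LinearMap.id) x = ⊥) ∧
    (∀ x : Bool, Gamma (K := K) (fun _ : Bool => false) (fun _ => true) (fun _ => K)
        (fun a : Bool => if a then LinearMap.id else 0) x = ⊥) ∧
    (Gamma (K := K) (fun _ : Bool => false) (fun _ => true) (fun _ => TensorProduct K K K)
        (fun a : Bool => TensorProduct.map (if a then 0 else LinearMap.id)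
          (if a then LinearMap.id else 0)) false = ⊤) ∧
    (Gamma (K := K) (fun _ : Bool => false) (fun _ => true) (fun _ => TensorProduct K K K)
        (fun a : Bool => TensorProduct.map (if a then 0 else LinearMap.id)
          (if a then LinearMap.id else 0)) true = ⊥) ∧
    ¬ (∀ x : Bool, Gamma (K := K) (fun _ : Bool => false) (fun _ => true)
        (fun _ => TensorProduct K K K)
        (fun a : Bool => TensorProduct.map (if a then 0 else LinearMap.id)
          (if a then LinearMap.id else 0)) x = ⊥) :=
  stmt_6_general (f := LinearMap.id) (g := LinearMap.id) Function.injective_id Function.injective_id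
end

section
/- Let V, W be representations of a quiver Q over a field K. Then for every vertex x, Γ(V⊗W)_x ⊆ Γ(V)_x ⊗ W_x + V_x ⊗ Δ(W)_x as subspaces of V_x ⊗ W_x (where Γ(V)_x ⊗ W_x and V_x ⊗ Δ(W)_x denote the images of the canonical inclusions). Equivalently, the composition Γ(V⊗W) ↪ V⊗W ↠ V ⊗ (W/Δ(W)) has image contained in Γ(V) ⊗ (W/Δ(W)). -/
open Submodule

/-!
Contract the second tensor factor of `Γ(V ⊗ W)` with the functionals that vanish on `Δ(W)`. Since
`Δ(W)` is coclosed, `W_a` induces an injection `W_{ta}/Δ(W)_{ta} → W_{ha}/Δ(W)_{ha}`, so over a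
field the functionals killing `Δ(W)_{ta}` are exactly the pullbacks along `W_a` of those killing
`Δ(W)_{ha}`. By naturality of contraction, the contractions of `Γ(V ⊗ W)` therefore form an
epimorphic subrepresentation of `V`, which lies in `Γ(V)`. As functionals separate the points of
`(V/Γ(V)) ⊗ (W/Δ(W))`, this says that `Γ(V ⊗ W)` vanishes there.
-/

section SliceMap

open TensorProduct

variable {R A B A' B' : Type*} [CommSemiring R] [AddCommMonoid A] [Module R A]
  [AddCommMonoid B] [Module R B] [AddCommMonoid A'] [Module R A'] [AddCommMonoid B'] [Module R B']

/-- The slice maps `id ⊗ f : A ⊗ B → A` (contraction of the second tensor factor with a functional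
`f`), bilinear in `f` and the tensor so that `Submodule.map₂` applies. -/
noncomputable def sliceMap : Module.Dual R B →ₗ[R] A ⊗[R] B →ₗ[R] A :=
  (LinearMap.lTensorHom A).compr₂ (TensorProduct.rid R A).toLinearMap

@[simp]
lemma sliceMap_tmul (f : Module.Dual R B) (a : A) (b : B) : sliceMap f (a ⊗ₜ[R] b) = f b • a := by
  simp [sliceMap]

lemma sliceMap_map (p : A →ₗ[R] A') (q : B →ₗ[R] B') (g : Module.Dual R B') (u : A ⊗[R] B) :
    sliceMap g (TensorProduct.map p q u) = p (sliceMap (q.dualMap g) u) := by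
  induction u with
  | zero => simp only [map_zero]
  | tmul a b => simp
  | add u v hu hv => simp only [map_add, hu, hv]

lemma eq_of_forall_sliceMap_eq [Module.Free R B] {u v : A ⊗[R] B}
    (h : ∀ f : Module.Dual R B, sliceMap f u = sliceMap f v) : u = v := by
  let b := Module.Free.chooseBasis R B
  apply (TensorProduct.equivFinsuppOfBasisRight (M := A) b).injective
  ext i
  rw [TensorProduct.equivFinsuppOfBasisRight_apply, TensorProduct.equivFinsuppOfBasisRight_apply]
  exact h (b.coord i)

/-- The span of all slices `(id ⊗ f) u` with `u ∈ T` and `f` vanishing on `D`. Over a field it is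
the smallest subspace `S` of `A` such that the image of `T` in `A ⊗ (B / D)` lies in
`S ⊗ (B / D)`. -/
noncomputable def sliceSubmodule (D : Submodule R B) (T : Submodule R (A ⊗[R] B)) :
    Submodule R A :=
  Submodule.map₂ sliceMap D.dualAnnihilator T

end SliceMap

section Quotient

open TensorProduct

variable {R A B : Type*} [CommRing R] [AddCommGroup A] [Module R A] [AddCommGroup B] [Module R B]

lemma ker_map_mkQ_mkQ (G : Submodule R A) (D : Submodule R B) :
    LinearMap.ker (TensorProduct.map G.mkQ D.mkQ) =
      LinearMap.range (TensorProduct.map G.subtype (LinearMap.id : B →ₗ[R] B)) ⊔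
        LinearMap.range (TensorProduct.map (LinearMap.id : A →ₗ[R] A) D.subtype) := by
  rw [sup_comm]
  exact TensorProduct.map_ker (LinearMap.exact_subtype_mkQ G) G.mkQ_surjective
    (LinearMap.exact_subtype_mkQ D) D.mkQ_surjective

lemma le_range_sup_range_of_sliceSubmodule_le {G : Submodule R A} {D : Submodule R B}
    [Module.Free R (B ⧸ D)] {T : Submodule R (A ⊗[R] B)} (h : sliceSubmodule D T ≤ G) :
    T ≤ LinearMap.range (TensorProduct.map G.subtype (LinearMap.id : B →ₗ[R] B)) ⊔
      LinearMap.range (TensorProduct.map (LinearMap.id : A →ₗ[R] A) D.subtype) := by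
  intro u hu
  rw [← ker_map_mkQ_mkQ, LinearMap.mem_ker]
  refine eq_of_forall_sliceMap_eq fun f => ?_
  have hf : D.mkQ.dualMap f ∈ D.dualAnnihilator :=
    D.range_dualMap_mkQ_eq ▸ LinearMap.mem_range_self D.mkQ.dualMap f
  rw [sliceMap_map, map_zero, Submodule.mkQ_apply, Submodule.Quotient.mk_eq_zero]
  exact h (Submodule.apply_mem_map₂ _ hf hu)

end Quotient

section Field

open TensorProduct

variable {K A B A' B' : Type*} [Field K] [AddCommGroup A] [Module K A] [AddCommGroup B] [Module K B]
  [AddCommGroup A'] [Module K A'] [AddCommGroup B'] [Module K B']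

lemma dualAnnihilator_comap (q : B →ₗ[K] B') (E : Submodule K B') :
    (E.comap q).dualAnnihilator = E.dualAnnihilator.map q.dualMap :=
  calc (E.comap q).dualAnnihilator
    _ = (LinearMap.ker (E.mkQ ∘ₗ q)).dualAnnihilator := by rw [LinearMap.ker_comp, E.ker_mkQ]
    _ = LinearMap.range (q.dualMap ∘ₗ E.mkQ.dualMap) := by
      rw [← LinearMap.range_dualMap_eq_dualAnnihilator_ker, LinearMap.dualMap_comp_dualMap]
    _ = E.dualAnnihilator.map q.dualMap := by rw [LinearMap.range_comp, E.range_dualMap_mkQ_eq]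

lemma map_sliceSubmodule_comap (p : A →ₗ[K] A') (q : B →ₗ[K] B') (E : Submodule K B')
    (T : Submodule K (A ⊗[K] B)) :
    (sliceSubmodule (E.comap q) T).map p = sliceSubmodule E (T.map (TensorProduct.map p q)) := by
  have naturality : (sliceMap.compr₂ p) ∘ₗ q.dualMap =
      (sliceMap (A := A')).compl₂ (TensorProduct.map p q) :=
    LinearMap.ext₂ fun g u => (sliceMap_map p q g u).symm
  calc (sliceSubmodule (E.comap q) T).map p
    _ = Submodule.map₂ (sliceMap.compr₂ p) (E.dualAnnihilator.map q.dualMap) T := by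
      rw [sliceSubmodule, dualAnnihilator_comap, Submodule.map_map₂]
    _ = sliceSubmodule E (T.map (TensorProduct.map p q)) := by
      rw [sliceSubmodule, Submodule.map₂_map_left, Submodule.map₂_map_right, naturality]

end Field

section Representation

variable {K : Type} [Field K] {Q₀ Q₁ : Type} {tl hd : Q₁ → Q₀}
  {Vx : Q₀ → Type} [∀ x, AddCommGroup (Vx x)] [∀ x, Module K (Vx x)]
  {Va : ∀ a : Q₁, Vx (tl a) →ₗ[K] Vx (hd a)}
  {Wx : Q₀ → Type} [∀ x, AddCommGroup (Wx x)] [∀ x, Module K (Wx x)]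
  {Wa : ∀ a : Q₁, Wx (tl a) →ₗ[K] Wx (hd a)}

lemma isCoclosedSub_delta : IsCoclosedSub tl hd Wx Wa (Delta tl hd Wx Wa) :=
  ⟨delta_subrep tl hd Wx Wa, fun a => le_iInf fun N =>
    (Submodule.comap_mono (delta_le tl hd Wx Wa N.2 (hd a))).trans (N.2.2 a)⟩

lemma IsCoclosedSub.comap_eq {N : ∀ x, Submodule K (Wx x)} (hN : IsCoclosedSub tl hd Wx Wa N)
    (a : Q₁) : (N (hd a)).comap (Wa a) = N (tl a) :=
  (hN.2 a).antisymm (Submodule.map_le_iff_le_comap.mp (hN.1 a))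

lemma isEpiSub_sliceSubmodule {T : ∀ x, Submodule K (TensorProduct K (Vx x) (Wx x))}
    {N : ∀ x, Submodule K (Wx x)}
    (hT : IsEpiSub tl hd (fun x => TensorProduct K (Vx x) (Wx x))
      (fun a => TensorProduct.map (Va a) (Wa a)) T)
    (hN : IsCoclosedSub tl hd Wx Wa N) :
    IsEpiSub tl hd Vx Va (fun x => sliceSubmodule (N x) (T x)) := fun a =>
  calc (sliceSubmodule (N (tl a)) (T (tl a))).map (Va a)
    _ = (sliceSubmodule ((N (hd a)).comap (Wa a)) (T (tl a))).map (Va a) := by rw [hN.comap_eq a]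
    _ = sliceSubmodule (N (hd a)) ((T (tl a)).map (TensorProduct.map (Va a) (Wa a))) :=
      map_sliceSubmodule_comap ..
    _ = sliceSubmodule (N (hd a)) (T (hd a)) := by rw [← hT a]

end Representation

theorem stmt_7_general {K : Type} [Field K] {Q₀ Q₁ : Type} (tl hd : Q₁ → Q₀)
    (Vx : Q₀ → Type) [∀ x, AddCommGroup (Vx x)] [∀ x, Module K (Vx x)]
    (Va : ∀ a : Q₁, Vx (tl a) →ₗ[K] Vx (hd a))
    (Wx : Q₀ → Type) [∀ x, AddCommGroup (Wx x)] [∀ x, Module K (Wx x)]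
    (Wa : ∀ a : Q₁, Wx (tl a) →ₗ[K] Wx (hd a)) (x : Q₀) :
    Gamma tl hd (fun y => TensorProduct K (Vx y) (Wx y))
        (fun a => TensorProduct.map (Va a) (Wa a)) x
      ≤ LinearMap.range (TensorProduct.map (Gamma tl hd Vx Va x).subtype
          (LinearMap.id : Wx x →ₗ[K] Wx x))
        ⊔ LinearMap.range (TensorProduct.map (LinearMap.id : Vx x →ₗ[K] Vx x)
          (Delta tl hd Wx Wa x).subtype) := by
  have slices_epi := isEpiSub_sliceSubmodule (gamma_epi tl hd
    (fun y => TensorProduct K (Vx y) (Wx y)) (fun a => TensorProduct.map (Va a) (Wa a)))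
    (isCoclosedSub_delta (Wa := Wa))
  exact le_range_sup_range_of_sliceSubmodule_le (le_gamma tl hd Vx Va slices_epi x)

/-- `Γ(V⊗W)_x ⊆ Γ(V)_x ⊗ W_x + V_x ⊗ Δ(W)_x` inside `V_x ⊗ W_x`,
where the two summands are the images of the canonical inclusions. -/
theorem stmt_7 {K : Type} [Field K] {Q₀ Q₁ : Type} [Fintype Q₀] [Fintype Q₁]
    (tl hd : Q₁ → Q₀)
    (Vx : Q₀ → Type) [∀ x, AddCommGroup (Vx x)] [∀ x, Module K (Vx x)]
    [∀ x, FiniteDimensional K (Vx x)]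
    (Va : ∀ a : Q₁, Vx (tl a) →ₗ[K] Vx (hd a))
    (Wx : Q₀ → Type) [∀ x, AddCommGroup (Wx x)] [∀ x, Module K (Wx x)]
    [∀ x, FiniteDimensional K (Wx x)]
    (Wa : ∀ a : Q₁, Wx (tl a) →ₗ[K] Wx (hd a)) :
    ∀ x : Q₀,
      Gamma tl hd (fun y => TensorProduct K (Vx y) (Wx y))
          (fun a => TensorProduct.map (Va a) (Wa a)) x
        ≤ LinearMap.range (TensorProduct.map (Gamma tl hd Vx Va x).subtype
            (LinearMap.id : Wx x →ₗ[K] Wx x))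
          ⊔ LinearMap.range (TensorProduct.map (LinearMap.id : Vx x →ₗ[K] Vx x)
            (Delta tl hd Wx Wa x).subtype) :=
  stmt_7_general tl hd Vx Va Wx Wa
end

section
/- Let Q be a connected quiver, x a vertex of Q, and define the global rank function r_Q(V) := dim_K (rkf V)_x (which is independent of the choice of x). Then for all representations V, W of Q: r_Q(V⊕W) = r_Q(V) + r_Q(W) and r_Q(V⊗W) = r_Q(V) · r_Q(W), and r_Q(𝟙_Q) = 1. In particular r_Q induces a ring homomorphism from the representation ring of Q to ℤ. -/
open Submodule

/-!
Everything except the upper bound for `Γ(V ⊗ W)` is formal: homomorphisms of representations map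
`Γ` to `Γ` and `Δ` to `Δ`, and `Γ(V) ⊗ Γ(W) ⊆ Γ(V ⊗ W)`, `Δ(V) ⊗ Γ(W) + Γ(V) ⊗ Δ(W) ⊆ Δ(V ⊗ W)`.
The upper bound `Γ(V ⊗ W) ⊆ Γ(V) ⊗ Γ(W) + Δ(V ⊗ W)` is a trace argument. Contracting
`e ∈ Γ(V ⊗ W)_x` with a functional `f` on `(V ⊗ W)_x` that kills `Δ(V ⊗ W)_x` gives an endomorphism
`A` of `V_x` with trace `f e`, and an endomorphism `B` of `W_x` that is adjoint to `A` for the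
pairing `f`. Arrows carry stable ranges of such contractions onto each other, so the stable range
of `A` lies in `Γ(V)_x` and that of `B` in `Γ(W)_x`. If `f` also kills `Γ(V)_x ⊗ Γ(W)_x`, then by
adjointness `A` is nilpotent, and `f e = tr A = 0`.
-/

open TensorProduct

section StableRange

variable {R M N : Type*} [Semiring R] [AddCommMonoid M] [Module R M] [AddCommMonoid N] [Module R N]

/-- The stable range of an endomorphism, the intersection of the ranges of its powers; over an
Artinian module it is the summand of the Fitting decomposition on which `φ` is bijective. -/
def stableRange (φ : Module.End R M) : Submodule R M := ⨅ n : ℕ, LinearMap.range (φ ^ n)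

lemma exists_stableRange_eq_range_pow [IsArtinian R M] (φ : Module.End R M) :
    ∃ n₀, ∀ n ≥ n₀, stableRange φ = LinearMap.range (φ ^ n) :=
  Filter.eventually_atTop.mp φ.eventually_iInf_range_pow_eq

lemma map_stableRange_comp [IsArtinian R M] [IsArtinian R N] (p : M →ₗ[R] N) (q : N →ₗ[R] M) :
    (stableRange (q ∘ₗ p : Module.End R M)).map p = stableRange (p ∘ₗ q : Module.End R N) := by
  obtain ⟨m, hm⟩ := exists_stableRange_eq_range_pow (q ∘ₗ p : Module.End R M)
  obtain ⟨n, hn⟩ := exists_stableRange_eq_range_pow (p ∘ₗ q : Module.End R N)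
  have intertwine (k : ℕ) :
      ((p ∘ₗ q : Module.End R N) ^ k) ∘ₗ p = p ∘ₗ ((q ∘ₗ p : Module.End R M) ^ k) :=
    Module.End.commute_pow_left_of_commute (LinearMap.comp_assoc _ _ _) k
  rw [hm (max m n) (le_max_left m n), ← LinearMap.range_comp, ← intertwine]
  apply le_antisymm
  · rw [hn (max m n) (le_max_right m n)]
    exact LinearMap.range_comp_le_range _ _
  · rw [hn (max m n + 1) (by omega), pow_succ, Module.End.mul_eq_comp, ← LinearMap.comp_assoc]
    exact LinearMap.range_comp_le_range _ _

end StableRange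

section Contraction

variable {R M M' N N' : Type*} [CommRing R] [AddCommGroup M] [Module R M]
  [AddCommGroup M'] [Module R M'] [AddCommGroup N] [Module R N] [AddCommGroup N'] [Module R N']

/-- The contraction over `N` of a functional `f` on `M' ⊗ N` with a tensor in `M ⊗ N`, as a map
`M' → M`: it sends `v` to the image of the tensor under `id ⊗ f(v ⊗ ·)`. -/
noncomputable def contraction (f : Module.Dual R (M' ⊗[R] N)) : M ⊗[R] N →ₗ[R] M' →ₗ[R] M :=
  dualTensorHom R M' M ∘ₗ LinearMap.rTensor M (curry f).flip ∘ₗ (TensorProduct.comm R M N)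

@[simp] lemma contraction_tmul_apply (f : Module.Dual R (M' ⊗[R] N)) (m : M) (n : N) (v : M') :
    contraction f (m ⊗ₜ n) v = f (v ⊗ₜ n) • m := by
  simp [contraction]

lemma contraction_zero : contraction (0 : Module.Dual R (M' ⊗[R] N)) =
    (0 : M ⊗[R] N →ₗ[R] M' →ₗ[R] M) :=
  TensorProduct.ext' fun m n => by ext; simp

lemma contraction_comp (f : Module.Dual R (M' ⊗[R] N')) (p : M →ₗ[R] M') (q : N →ₗ[R] N')
    (e : M ⊗[R] N) :
    contraction (f ∘ₗ LinearMap.lTensor M' q) e ∘ₗ p = contraction (f ∘ₗ map p q) e := by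
  induction e with
  | zero => simp
  | tmul m n => ext; simp
  | add e₁ e₂ h₁ h₂ => simp only [map_add, LinearMap.add_comp, h₁, h₂]

lemma comp_contraction (f : Module.Dual R (M' ⊗[R] N')) (p : M →ₗ[R] M') (q : N →ₗ[R] N')
    (e : M ⊗[R] N) :
    p ∘ₗ contraction (f ∘ₗ LinearMap.lTensor M' q) e = contraction f (map p q e) := by
  induction e with
  | zero => simp
  | tmul m n => ext; simp
  | add e₁ e₂ h₁ h₂ => simp only [map_add, LinearMap.comp_add, h₁, h₂]

lemma map_stableRange_contraction [IsArtinian R M] [IsArtinian R M']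
    (f : Module.Dual R (M' ⊗[R] N')) (p : M →ₗ[R] M') (q : N →ₗ[R] N') (e : M ⊗[R] N) :
    (stableRange (contraction (f ∘ₗ map p q) e)).map p =
      stableRange (contraction f (map p q e)) := by
  rw [← contraction_comp, ← comp_contraction, map_stableRange_comp]

lemma trace_contraction [Module.Free R M] [Module.Finite R M] (f : Module.Dual R (M ⊗[R] N))
    (e : M ⊗[R] N) : LinearMap.trace R M (contraction f e) = f e := by
  simp only [contraction, LinearMap.comp_apply, LinearMap.trace_eq_contract_apply]
  induction e with
  | zero => simp
  | tmul m n => simp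
  | add e₁ e₂ h₁ h₂ => simp only [map_add, h₁, h₂]

lemma apply_contraction_tmul (f : Module.Dual R (M ⊗[R] N)) (e : M ⊗[R] N) (v : M) (w : N) :
    f (contraction f e v ⊗ₜ w) =
      f (v ⊗ₜ contraction (f ∘ₗ TensorProduct.comm R N M) (TensorProduct.comm R M N e) w) := by
  induction e with
  | zero => simp
  | tmul m n => simp [← smul_tmul', mul_comm]
  | add e₁ e₂ h₁ h₂ => simp only [map_add, LinearMap.add_apply, add_tmul, tmul_add, h₁, h₂]

lemma apply_contraction_pow_tmul (f : Module.Dual R (M ⊗[R] N)) (e : M ⊗[R] N) (k : ℕ)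
    (v : M) (w : N) :
    f ((contraction f e ^ k : Module.End R M) v ⊗ₜ w) =
      f (v ⊗ₜ (contraction (f ∘ₗ TensorProduct.comm R N M) (TensorProduct.comm R M N e) ^ k :
        Module.End R N) w) := by
  induction k generalizing v w with
  | zero => simp
  | succ k ih => rw [pow_succ', pow_succ, Module.End.mul_apply, Module.End.mul_apply,
      apply_contraction_tmul, ih]

lemma isNilpotent_contraction [IsArtinian R M] [IsArtinian R N] (f : Module.Dual R (M ⊗[R] N))
    (e : M ⊗[R] N)
    (hf : ∀ v ∈ stableRange (contraction f e), ∀ w ∈ stableRange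
      (contraction (f ∘ₗ TensorProduct.comm R N M) (TensorProduct.comm R M N e)),
      f (v ⊗ₜ w) = 0) :
    IsNilpotent (contraction f e : Module.End R M) := by
  set A : Module.End R M := contraction f e
  obtain ⟨m, hm⟩ := exists_stableRange_eq_range_pow A
  obtain ⟨n, hn⟩ := exists_stableRange_eq_range_pow
    (contraction (f ∘ₗ TensorProduct.comm R N M) (TensorProduct.comm R M N e))
  have f_pow_tmul (v : M) (w : N) : f ((A ^ (n + m)) v ⊗ₜ w) = 0 := by
    rw [pow_add, Module.End.mul_apply, apply_contraction_pow_tmul]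
    exact hf _ (hm m le_rfl ▸ ⟨v, rfl⟩) _ (hn n le_rfl ▸ ⟨w, rfl⟩)
  have f_comp : f ∘ₗ map (A ^ (n + m)) LinearMap.id = 0 := by
    ext v w
    exact f_pow_tmul v w
  refine ⟨n + m + 1, ?_⟩
  calc A ^ (n + m + 1) = contraction f e ∘ₗ (A ^ (n + m)) := pow_succ' A (n + m)
    _ = contraction (f ∘ₗ map (A ^ (n + m)) LinearMap.id) e := by
      rw [← contraction_comp, LinearMap.lTensor_id, LinearMap.comp_id]
    _ = 0 := by rw [f_comp, contraction_zero, LinearMap.zero_apply]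

lemma apply_eq_zero_of_stableRange_contraction [IsReduced R] [Module.Free R M] [Module.Finite R M]
    [IsArtinian R M] [IsArtinian R N] (f : Module.Dual R (M ⊗[R] N)) (e : M ⊗[R] N)
    (hf : ∀ v ∈ stableRange (contraction f e), ∀ w ∈ stableRange
      (contraction (f ∘ₗ TensorProduct.comm R N M) (TensorProduct.comm R M N e)),
      f (v ⊗ₜ w) = 0) :
    f e = 0 := by
  rw [← trace_contraction]
  exact (LinearMap.isNilpotent_trace_of_isNilpotent (isNilpotent_contraction f e hf)).eq_zero

end Contraction

lemma dualAnnihilator_comap_s9 {K V W : Type*} [Field K] [AddCommGroup V] [Module K V]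
    [AddCommGroup W] [Module K W] (g : V →ₗ[K] W) (q : Submodule K W) :
    (q.comap g).dualAnnihilator = q.dualAnnihilator.map g.dualMap := by
  have h := LinearMap.range_dualMap_eq_dualAnnihilator_ker (q.mkQ ∘ₗ g)
  rwa [LinearMap.ker_comp, ker_mkQ, ← LinearMap.dualMap_comp_dualMap, LinearMap.range_comp,
    range_dualMap_mkQ_eq, eq_comm] at h

section Representations

variable {K : Type} [Field K] {Q₀ Q₁ : Type} {tl hd : Q₁ → Q₀}
  {Vx : Q₀ → Type} [∀ x, AddCommGroup (Vx x)] [∀ x, Module K (Vx x)]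
  {Va : ∀ a : Q₁, Vx (tl a) →ₗ[K] Vx (hd a)}
  {Wx : Q₀ → Type} [∀ x, AddCommGroup (Wx x)] [∀ x, Module K (Wx x)]
  {Wa : ∀ a : Q₁, Wx (tl a) →ₗ[K] Wx (hd a)}

local notation "Va⊕Wa" => fun a => LinearMap.prodMap (Va a) (Wa a)
local notation "Va⊗Wa" => fun a => TensorProduct.map (Va a) (Wa a)
local notation "Γ(V)" => Gamma tl hd Vx Va
local notation "Γ(W)" => Gamma tl hd Wx Wa
local notation "Γ(V⊕W)" => Gamma tl hd (fun y => Vx y × Wx y) Va⊕Wa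
local notation "Γ(V⊗W)" => Gamma tl hd (fun y => Vx y ⊗[K] Wx y) Va⊗Wa
local notation "Δ(V)" => Delta tl hd Vx Va
local notation "Δ(W)" => Delta tl hd Wx Wa
local notation "Δ(V⊕W)" => Delta tl hd (fun y => Vx y × Wx y) Va⊕Wa
local notation "Δ(V⊗W)" => Delta tl hd (fun y => Vx y ⊗[K] Wx y) Va⊗Wa

lemma isCoclosedSub_iff {N : ∀ y, Submodule K (Vx y)} :
    IsCoclosedSub tl hd Vx Va N ↔ ∀ a, (N (hd a)).comap (Va a) = N (tl a) := by
  simp only [IsCoclosedSub, IsSubrep, map_le_iff_le_comap, ← forall_and, le_antisymm_iff, and_comm]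

lemma comap_delta (a : Q₁) : (Δ(V) (hd a)).comap (Va a) = Δ(V) (tl a) := by
  simp only [Delta, comap_iInf]
  exact iInf_congr fun N => isCoclosedSub_iff.1 N.2 a

lemma gamma_eq_top_of_surjective (h : ∀ a, Function.Surjective (Va a)) (x : Q₀) : Γ(V) x = ⊤ :=
  top_le_iff.1 <| le_gamma tl hd Vx Va (U := fun _ => ⊤)
    (fun a => by rw [Submodule.map_top, LinearMap.range_eq_top.2 (h a)]) x

lemma delta_eq_bot_of_injective (h : ∀ a, Function.Injective (Va a)) (x : Q₀) : Δ(V) x = ⊥ :=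
  le_bot_iff.1 <| delta_le tl hd Vx Va (N := fun _ => ⊥)
    (isCoclosedSub_iff.2 fun a => by rw [comap_bot, LinearMap.ker_eq_bot.2 (h a)]) x

section Homomorphisms

variable (tl hd Vx Va Wx Wa) in
/-- The linear maps `φ x` form a homomorphism from the representation `V` to `W`. -/
def IsRepHom (φ : ∀ x, Vx x →ₗ[K] Wx x) : Prop :=
  ∀ a, φ (hd a) ∘ₗ Va a = Wa a ∘ₗ φ (tl a)

variable {φ : ∀ x, Vx x →ₗ[K] Wx x}

lemma IsRepHom.map_gamma_le (hφ : IsRepHom tl hd Vx Va Wx Wa φ) (x : Q₀) :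
    (Γ(V) x).map (φ x) ≤ Γ(W) x := by
  refine le_gamma tl hd Wx Wa (U := fun y => (Γ(V) y).map (φ y)) (fun a => ?_) x
  rw [← Submodule.map_comp, ← hφ a, Submodule.map_comp, gamma_epi]

lemma IsRepHom.delta_le_comap (hφ : IsRepHom tl hd Vx Va Wx Wa φ) (x : Q₀) :
    Δ(V) x ≤ (Δ(W) x).comap (φ x) := by
  refine delta_le tl hd Vx Va (N := fun y => (Δ(W) y).comap (φ y))
    (isCoclosedSub_iff.2 fun a => ?_) x
  rw [← comap_comp, hφ a, comap_comp, comap_delta]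

end Homomorphisms

section DirectSum

lemma isRepHom_fst : IsRepHom tl hd (fun y => Vx y × Wx y) Va⊕Wa Vx Va
    (fun y => LinearMap.fst K (Vx y) (Wx y)) :=
  fun _ => rfl

lemma isRepHom_snd : IsRepHom tl hd (fun y => Vx y × Wx y) Va⊕Wa Wx Wa
    (fun y => LinearMap.snd K (Vx y) (Wx y)) :=
  fun _ => rfl

lemma isRepHom_inl : IsRepHom tl hd Vx Va (fun y => Vx y × Wx y) Va⊕Wa
    (fun y => LinearMap.inl K (Vx y) (Wx y)) :=
  fun a => by ext <;> simp

lemma isRepHom_inr : IsRepHom tl hd Wx Wa (fun y => Vx y × Wx y) Va⊕Wa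
    (fun y => LinearMap.inr K (Vx y) (Wx y)) :=
  fun a => by ext <;> simp

lemma gamma_prod (x : Q₀) : Γ(V⊕W) x = (Γ(V) x).prod (Γ(W) x) := by
  apply le_antisymm
  · rw [le_prod_iff]
    exact ⟨isRepHom_fst.map_gamma_le x, isRepHom_snd.map_gamma_le x⟩
  · rw [prod_le_iff]
    exact ⟨isRepHom_inl.map_gamma_le x, isRepHom_inr.map_gamma_le x⟩

lemma delta_prod (x : Q₀) : Δ(V⊕W) x = (Δ(V) x).prod (Δ(W) x) := by
  apply le_antisymm
  · rw [le_prod_iff, map_le_iff_le_comap, map_le_iff_le_comap]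
    exact ⟨isRepHom_fst.delta_le_comap x, isRepHom_snd.delta_le_comap x⟩
  · rw [prod_le_iff, map_le_iff_le_comap, map_le_iff_le_comap]
    exact ⟨isRepHom_inl.delta_le_comap x, isRepHom_inr.delta_le_comap x⟩

end DirectSum

section Tensor

variable (tl hd Vx Va Wx Wa) in
lemma isRepHom_tensorComm :
    IsRepHom tl hd (fun y => Vx y ⊗[K] Wx y) Va⊗Wa
      (fun y => Wx y ⊗[K] Vx y) (fun a => TensorProduct.map (Wa a) (Va a))
      (fun y => (TensorProduct.comm K (Vx y) (Wx y)).toLinearMap) :=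
  fun _ => (map_comp_comm_eq _ _).symm

lemma map_gamma_tensor (a : Q₁) :
    (Γ(V⊗W) (tl a)).map (TensorProduct.map (Va a) (Wa a)) = Γ(V⊗W) (hd a) :=
  gamma_epi tl hd (fun y => Vx y ⊗[K] Wx y) Va⊗Wa a

lemma comap_delta_tensor (a : Q₁) :
    (Δ(V⊗W) (hd a)).comap (TensorProduct.map (Va a) (Wa a)) = Δ(V⊗W) (tl a) :=
  comap_delta (Vx := fun y => Vx y ⊗[K] Wx y) (Va := Va⊗Wa) a

lemma range_mapIncl_gamma_le (x : Q₀) :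
    LinearMap.range (mapIncl (Γ(V) x) (Γ(W) x)) ≤ Γ(V⊗W) x := by
  refine le_gamma tl hd (fun y => Vx y ⊗[K] Wx y) Va⊗Wa
    (U := fun y => LinearMap.range (mapIncl (Γ(V) y) (Γ(W) y))) (fun a => ?_) x
  simp only [range_mapIncl, ← gamma_epi tl hd Vx Va a, ← gamma_epi tl hd Wx Wa a,
    Submodule.map_map₂, map₂_map_map]
  rfl

lemma tmul_mem_delta_of_left {x : Q₀} {v : Vx x} (hv : v ∈ Δ(V) x) {w : Wx x}
    (hw : w ∈ Γ(W) x) : v ⊗ₜ[K] w ∈ Δ(V⊗W) x := by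
  suffices h : Δ(V) x ≤ ⨅ w ∈ Γ(W) x, (Δ(V⊗W) x).comap ((TensorProduct.mk K _ _).flip w) by
    have hv' := h hv
    simp only [mem_iInf] at hv'
    exact hv' w hw
  refine delta_le tl hd Vx Va
    (N := fun y => ⨅ w ∈ Γ(W) y, (Δ(V⊗W) y).comap ((TensorProduct.mk K _ _).flip w))
    (isCoclosedSub_iff.2 fun a => ?_) x
  ext v
  simp [← gamma_epi tl hd Wx Wa a, ← comap_delta_tensor a]

lemma tmul_mem_delta_of_right {x : Q₀} {v : Vx x} (hv : v ∈ Γ(V) x) {w : Wx x}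
    (hw : w ∈ Δ(W) x) : v ⊗ₜ[K] w ∈ Δ(V⊗W) x :=
  (isRepHom_tensorComm tl hd Wx Wa Vx Va).delta_le_comap x (tmul_mem_delta_of_left hw hv)

lemma iSup_stableRange_contraction_le_gamma [∀ y, FiniteDimensional K (Vx y)] (x : Q₀) :
    ⨆ e ∈ Γ(V⊗W) x, ⨆ f ∈ (Δ(V⊗W) x).dualAnnihilator, stableRange (contraction f e) ≤
      Γ(V) x := by
  refine le_gamma tl hd Vx Va (U := fun y => ⨆ e ∈ Γ(V⊗W) y,
    ⨆ f ∈ (Δ(V⊗W) y).dualAnnihilator, stableRange (contraction f e)) (fun a => ?_) x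
  have gamma_hd : (Γ(V⊗W) (hd a) : Set _) = TensorProduct.map (Va a) (Wa a) '' Γ(V⊗W) (tl a) :=
    congrArg _ (map_gamma_tensor a).symm
  have annihilator_tl : ((Δ(V⊗W) (tl a)).dualAnnihilator : Set _) =
      (TensorProduct.map (Va a) (Wa a)).dualMap '' (Δ(V⊗W) (hd a)).dualAnnihilator := by
    rw [← comap_delta_tensor a, dualAnnihilator_comap_s9, map_coe]
  simp only [← SetLike.mem_coe, gamma_hd, annihilator_tl, iSup_image, Submodule.map_iSup]
  simp only [← map_stableRange_contraction]
  rfl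

lemma stableRange_contraction_le_gamma [∀ y, FiniteDimensional K (Vx y)] {x : Q₀}
    {e : Vx x ⊗[K] Wx x} (he : e ∈ Γ(V⊗W) x)
    {f : Module.Dual K (Vx x ⊗[K] Wx x)} (hf : f ∈ (Δ(V⊗W) x).dualAnnihilator) :
    stableRange (contraction f e) ≤ Γ(V) x := by
  refine le_trans ?_ (iSup_stableRange_contraction_le_gamma (Wa := Wa) x)
  exact le_iSup₂_of_le e he (le_iSup₂_of_le f hf le_rfl)

lemma stableRange_contraction_comm_le_gamma [∀ y, FiniteDimensional K (Wx y)] {x : Q₀}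
    {e : Vx x ⊗[K] Wx x} (he : e ∈ Γ(V⊗W) x)
    {f : Module.Dual K (Vx x ⊗[K] Wx x)} (hf : f ∈ (Δ(V⊗W) x).dualAnnihilator) :
    stableRange (contraction (f ∘ₗ TensorProduct.comm K (Wx x) (Vx x))
      (TensorProduct.comm K (Vx x) (Wx x) e)) ≤ Γ(W) x := by
  refine stableRange_contraction_le_gamma
    ((isRepHom_tensorComm tl hd Vx Va Wx Wa).map_gamma_le x ⟨e, he, rfl⟩)
    ((mem_dualAnnihilator _).2 fun t ht => ?_)
  exact (mem_dualAnnihilator f).1 hf _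
    ((isRepHom_tensorComm tl hd Wx Wa Vx Va).delta_le_comap x ht)

lemma gamma_tensor_le [∀ y, FiniteDimensional K (Vx y)] [∀ y, FiniteDimensional K (Wx y)]
    (x : Q₀) :
    Γ(V⊗W) x ≤ LinearMap.range (mapIncl (Γ(V) x) (Γ(W) x)) ⊔ Δ(V⊗W) x := by
  intro e he
  rw [← Subspace.forall_mem_dualAnnihilator_apply_eq_zero_iff]
  intro f hf
  rw [dualAnnihilator_sup_eq, mem_inf] at hf
  obtain ⟨hf_gamma, hf_delta⟩ := hf
  refine apply_eq_zero_of_stableRange_contraction f e fun v hv w hw => ?_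
  have hv' : v ∈ Γ(V) x := stableRange_contraction_le_gamma he hf_delta hv
  have hw' : w ∈ Γ(W) x := stableRange_contraction_comm_le_gamma he hf_delta hw
  exact (mem_dualAnnihilator f).1 hf_gamma _ ⟨⟨v, hv'⟩ ⊗ₜ ⟨w, hw'⟩, rfl⟩

lemma range_mapIncl_gamma_sup_delta [∀ y, FiniteDimensional K (Vx y)]
    [∀ y, FiniteDimensional K (Wx y)] (x : Q₀) :
    LinearMap.range (mapIncl (Γ(V) x) (Γ(W) x)) ⊔ Δ(V⊗W) x = Γ(V⊗W) x ⊔ Δ(V⊗W) x :=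
  le_antisymm (sup_le_sup_right (range_mapIncl_gamma_le x) _)
    (sup_le (gamma_tensor_le x) le_sup_right)

variable (tl hd Vx Va) in
/-- The arrow maps of the quotient representation `V / Δ(V)`. -/
def quotDeltaMap (a : Q₁) : (Vx (tl a) ⧸ Δ(V) (tl a)) →ₗ[K] (Vx (hd a) ⧸ Δ(V) (hd a)) :=
  mapQ _ _ (Va a) (comap_delta a).ge

lemma quotDeltaMap_injective (a : Q₁) : Function.Injective (quotDeltaMap tl hd Vx Va a) := by
  rw [← LinearMap.ker_eq_bot, quotDeltaMap, ker_mapQ, comap_delta, mkQ_map_self]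

lemma isRepHom_map_mkQ_delta :
    IsRepHom tl hd (fun y => Vx y ⊗[K] Wx y) Va⊗Wa
      (fun y => (Vx y ⧸ Δ(V) y) ⊗[K] (Wx y ⧸ Δ(W) y))
      (fun a => TensorProduct.map (quotDeltaMap tl hd Vx Va a) (quotDeltaMap tl hd Wx Wa a))
      (fun y => TensorProduct.map (Δ(V) y).mkQ (Δ(W) y).mkQ) :=
  fun _ => TensorProduct.ext' fun _ _ => rfl

lemma delta_tensor_le_ker (x : Q₀) :
    Δ(V⊗W) x ≤ LinearMap.ker (TensorProduct.map (Δ(V) x).mkQ (Δ(W) x).mkQ) := by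
  have injective (a : Q₁) : Function.Injective
      (TensorProduct.map (quotDeltaMap tl hd Vx Va a) (quotDeltaMap tl hd Wx Wa a)) :=
    map_injective_of_flat_flat _ _ (quotDeltaMap_injective a) (quotDeltaMap_injective a)
  refine (isRepHom_map_mkQ_delta.delta_le_comap x).trans_eq ?_
  rw [delta_eq_bot_of_injective (Vx := fun y => (Vx y ⧸ Δ(V) y) ⊗[K] (Wx y ⧸ Δ(W) y)) injective,
    comap_bot]

end Tensor

section GlobalTensorFunctor

variable {x : Q₀} {M N : Type*} [AddCommGroup M] [Module K M] [AddCommGroup N] [Module K N]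

variable (tl hd Vx Va) in
/-- The map `M → (rkf V)_x` induced by a linear map `g : M → V_x` whose image together with
`Δ(V)_x` spans `Γ(V)_x + Δ(V)_x`. -/
def toRkf (g : M →ₗ[K] Vx x) (hg : LinearMap.range g ⊔ Δ(V) x = Γ(V) x ⊔ Δ(V) x) :
    M →ₗ[K] rkfSpace tl hd Vx Va x :=
  (rkfDen tl hd Vx Va x).mkQ ∘ₗ
    g.codRestrict (GD tl hd Vx Va x) fun m => hg.le (mem_sup_left ⟨m, rfl⟩)

lemma ker_toRkf (g : M →ₗ[K] Vx x) (hg : LinearMap.range g ⊔ Δ(V) x = Γ(V) x ⊔ Δ(V) x) :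
    LinearMap.ker (toRkf tl hd Vx Va g hg) = (Δ(V) x).comap g := by
  rw [toRkf, LinearMap.ker_comp, ker_mkQ, ← comap_comp, LinearMap.subtype_comp_codRestrict]

lemma toRkf_surjective (g : M →ₗ[K] Vx x)
    (hg : LinearMap.range g ⊔ Δ(V) x = Γ(V) x ⊔ Δ(V) x) :
    Function.Surjective (toRkf tl hd Vx Va g hg) := by
  intro u
  obtain ⟨⟨v, hv⟩, rfl⟩ := mkQ_surjective _ u
  obtain ⟨_, ⟨m, rfl⟩, d, d_mem, rfl⟩ := mem_sup.1 (hg.ge hv)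
  refine ⟨m, (Submodule.Quotient.eq _).2 ?_⟩
  simpa using d_mem

/-- Presents `(rkf V)_x` as the image `N` of any surjection `h` that has the same kernel as the
map `M → (rkf V)_x` induced by `g`. -/
noncomputable def rkfEquiv (g : M →ₗ[K] Vx x)
    (hg : LinearMap.range g ⊔ Δ(V) x = Γ(V) x ⊔ Δ(V) x) (h : M →ₗ[K] N)
    (hh : Function.Surjective h) (hker : LinearMap.ker h = (Δ(V) x).comap g) :
    rkfSpace tl hd Vx Va x ≃ₗ[K] N :=
  ((toRkf tl hd Vx Va g hg).quotKerEquivOfSurjective (toRkf_surjective g hg)).symm ≪≫ₗ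
    quotEquivOfEq _ _ ((ker_toRkf g hg).trans hker.symm) ≪≫ₗ h.quotKerEquivOfSurjective hh

variable (tl hd Vx Va x) in
/-- The canonical surjection `Γ(V)_x → (rkf V)_x`. -/
def gammaToRkf : Γ(V) x →ₗ[K] rkfSpace tl hd Vx Va x :=
  toRkf tl hd Vx Va (Γ(V) x).subtype (by rw [range_subtype])

lemma gammaToRkf_surjective : Function.Surjective (gammaToRkf tl hd Vx Va x) :=
  toRkf_surjective _ _

lemma ker_gammaToRkf :
    LinearMap.ker (gammaToRkf tl hd Vx Va x) = (Δ(V) x).comap (Γ(V) x).subtype :=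
  ker_toRkf _ _

variable (tl hd Vx Va x) in
/-- The inclusion of `(rkf V)_x = (Γ(V)_x + Δ(V)_x) / Δ(V)_x` in `V_x / Δ(V)_x`. -/
def rkfToQuotDelta : rkfSpace tl hd Vx Va x →ₗ[K] Vx x ⧸ Δ(V) x :=
  mapQ _ _ (GD tl hd Vx Va x).subtype le_rfl

lemma rkfToQuotDelta_injective : Function.Injective (rkfToQuotDelta tl hd Vx Va x) := by
  rw [← LinearMap.ker_eq_bot, rkfToQuotDelta, ker_mapQ, mkQ_map_self]

/-- `rkf (V ⊕ W) ≅ rkf V ⊕ rkf W`. -/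
noncomputable def rkfProdEquiv :
    rkfSpace tl hd (fun y => Vx y × Wx y) Va⊕Wa x ≃ₗ[K]
      rkfSpace tl hd Vx Va x × rkfSpace tl hd Wx Wa x :=
  rkfEquiv ((Γ(V) x).subtype.prodMap (Γ(W) x).subtype)
    (by rw [LinearMap.range_prodMap, range_subtype, range_subtype, gamma_prod])
    ((gammaToRkf tl hd Vx Va x).prodMap (gammaToRkf tl hd Wx Wa x))
    (gammaToRkf_surjective.prodMap gammaToRkf_surjective)
    (by rw [LinearMap.ker_prodMap, ker_gammaToRkf, ker_gammaToRkf, delta_prod]; rfl)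

lemma ker_map_gammaToRkf :
    LinearMap.ker (TensorProduct.map (gammaToRkf tl hd Vx Va x) (gammaToRkf tl hd Wx Wa x)) =
      (Δ(V⊗W) x).comap (mapIncl (Γ(V) x) (Γ(W) x)) := by
  apply le_antisymm
  · rw [map_ker (LinearMap.exact_subtype_ker_map _) gammaToRkf_surjective
      (LinearMap.exact_subtype_ker_map _) gammaToRkf_surjective, LinearMap.lTensor,
      LinearMap.rTensor, range_map, range_map, range_subtype, range_subtype,
      ker_gammaToRkf, ker_gammaToRkf]
    exact sup_le (map₂_le.2 fun v _ w hw => tmul_mem_delta_of_right v.2 hw)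
      (map₂_le.2 fun v hv w _ => tmul_mem_delta_of_left hv w.2)
  · intro t ht
    apply map_injective_of_flat_flat _ _ (rkfToQuotDelta_injective (Va := Va))
      (rkfToQuotDelta_injective (Va := Wa))
    have h : TensorProduct.map (Δ(V) x).mkQ (Δ(W) x).mkQ (mapIncl (Γ(V) x) (Γ(W) x) t) = 0 :=
      delta_tensor_le_ker x ht
    rw [mapIncl, ← LinearMap.comp_apply, ← TensorProduct.map_comp] at h
    rw [map_zero, ← LinearMap.comp_apply, ← TensorProduct.map_comp]
    exact h

/-- `rkf (V ⊗ W) ≅ rkf V ⊗ rkf W`. -/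
noncomputable def rkfTensorEquiv [∀ y, FiniteDimensional K (Vx y)]
    [∀ y, FiniteDimensional K (Wx y)] :
    rkfSpace tl hd (fun y => Vx y ⊗[K] Wx y) Va⊗Wa x ≃ₗ[K]
      rkfSpace tl hd Vx Va x ⊗[K] rkfSpace tl hd Wx Wa x :=
  rkfEquiv (mapIncl (Γ(V) x) (Γ(W) x)) (range_mapIncl_gamma_sup_delta x)
    (TensorProduct.map (gammaToRkf tl hd Vx Va x) (gammaToRkf tl hd Wx Wa x))
    (map_surjective gammaToRkf_surjective gammaToRkf_surjective) ker_map_gammaToRkf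

/-- `rkf 𝟙 ≅ 𝟙`. -/
noncomputable def rkfOneEquiv :
    rkfSpace (K := K) tl hd (fun _ => K) (fun _ => LinearMap.id) x ≃ₗ[K] K :=
  rkfEquiv LinearMap.id
    (by rw [gamma_eq_top_of_surjective fun _ => Function.surjective_id, LinearMap.range_id])
    LinearMap.id Function.surjective_id
    (by rw [delta_eq_bot_of_injective fun _ => Function.injective_id, comap_id, LinearMap.ker_id])

end GlobalTensorFunctor

end Representations

theorem stmt_9_general {K : Type} [Field K] {Q₀ Q₁ : Type} (tl hd : Q₁ → Q₀) (x : Q₀)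
    (Vx : Q₀ → Type) [∀ y, AddCommGroup (Vx y)] [∀ y, Module K (Vx y)]
    [∀ y, FiniteDimensional K (Vx y)]
    (Va : ∀ a : Q₁, Vx (tl a) →ₗ[K] Vx (hd a))
    (Wx : Q₀ → Type) [∀ y, AddCommGroup (Wx y)] [∀ y, Module K (Wx y)]
    [∀ y, FiniteDimensional K (Wx y)]
    (Wa : ∀ a : Q₁, Wx (tl a) →ₗ[K] Wx (hd a)) :
    Module.finrank K (rkfSpace tl hd (fun y => Vx y × Wx y)
        (fun a => (Va a).prodMap (Wa a)) x)
      = Module.finrank K (rkfSpace tl hd Vx Va x)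
        + Module.finrank K (rkfSpace tl hd Wx Wa x) ∧
    Module.finrank K (rkfSpace tl hd (fun y => TensorProduct K (Vx y) (Wx y))
        (fun a => TensorProduct.map (Va a) (Wa a)) x)
      = Module.finrank K (rkfSpace tl hd Vx Va x)
        * Module.finrank K (rkfSpace tl hd Wx Wa x) ∧
    Module.finrank K (rkfSpace (K := K) tl hd (fun _ => K) (fun _ => LinearMap.id) x) = 1 :=
  ⟨rkfProdEquiv.finrank_eq.trans Module.finrank_prod,
    rkfTensorEquiv.finrank_eq.trans Module.finrank_tensorProduct,
    rkfOneEquiv.finrank_eq.trans (Module.finrank_self K)⟩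

/-- the global rank function `r_Q(V) = dim_K (rkf V)_x` (on a connected quiver,
independent of `x`) is additive on direct sums, multiplicative on tensor products, and takes
the value `1` on the identity representation; hence it induces a ring homomorphism
`R(Q) → ℤ`. -/
theorem stmt_9 {K : Type} [Field K] {Q₀ Q₁ : Type} [Fintype Q₀] [Fintype Q₁]
    (tl hd : Q₁ → Q₀)
    (hconn : ∀ x y : Q₀, Relation.ReflTransGen
      (fun u v => ∃ a : Q₁, (tl a = u ∧ hd a = v) ∨ (hd a = u ∧ tl a = v)) x y)
    (x : Q₀)
    (Vx : Q₀ → Type) [∀ y, AddCommGroup (Vx y)] [∀ y, Module K (Vx y)]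
    [∀ y, FiniteDimensional K (Vx y)]
    (Va : ∀ a : Q₁, Vx (tl a) →ₗ[K] Vx (hd a))
    (Wx : Q₀ → Type) [∀ y, AddCommGroup (Wx y)] [∀ y, Module K (Wx y)]
    [∀ y, FiniteDimensional K (Wx y)]
    (Wa : ∀ a : Q₁, Wx (tl a) →ₗ[K] Wx (hd a)) :
    Module.finrank K (rkfSpace tl hd (fun y => Vx y × Wx y)
        (fun a => (Va a).prodMap (Wa a)) x)
      = Module.finrank K (rkfSpace tl hd Vx Va x)
        + Module.finrank K (rkfSpace tl hd Wx Wa x) ∧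
    Module.finrank K (rkfSpace tl hd (fun y => TensorProduct K (Vx y) (Wx y))
        (fun a => TensorProduct.map (Va a) (Wa a)) x)
      = Module.finrank K (rkfSpace tl hd Vx Va x)
        * Module.finrank K (rkfSpace tl hd Wx Wa x) ∧
    Module.finrank K (rkfSpace (K := K) tl hd (fun _ => K) (fun _ => LinearMap.id) x) = 1 := by
  exact stmt_9_general tl hd x Vx Va Wx Wa
end
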